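/- arXiv:1010.4613 — 2 statements merged into one kernel-verified Lean document; each statement's English description precedes it below -/
import Mathlib

section
/- For every natural number n ≥ 3 there exists a natural number M such that every finite family of at least M pairwise noncrossing nonempty compact convex subsets of ℝ² that is in general position contains a subfamily of n sets in convex position. -/
open Set

noncomputable section

/-- The Euclidean plane. -/
abbrev Plane : Type := EuclideanSpace ℝ (Fin 2)

/-- The 2×2 determinant of two plane vectors. -/
def det2 (u v : Plane) : ℝ := u 0 * v 1 - u 1 * v 0

/-- A convex body in the plane: nonempty, compact and convex. -/
def ConvexBody2 (A : Set Plane) : Prop := A.Nonempty ∧ IsCompact A ∧ Convex ℝ A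

/-- A family of sets is in convex position if removing any member changes the
convex hull of the union of the family. -/
def ConvexPos (F : Set (Set Plane)) : Prop :=
  ∀ A ∈ F, convexHull ℝ (⋃₀ F) ≠ convexHull ℝ (⋃₀ (F \ {A}))

/-- A family is in general position if every 3-element subfamily is in convex position. -/
def GenPos (F : Set (Set Plane)) : Prop :=
  ∀ G ⊆ F, G.ncard = 3 → ConvexPos G

/-- Two sets are noncrossing if both set differences are connected. -/
def NoncrossingPair (A B : Set Plane) : Prop := IsConnected (A \ B) ∧ IsConnected (B \ A)

/-- Two convex bodies are tangent if they intersect but their interiors are disjoint. -/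
def TangentBodies (A B : Set Plane) : Prop :=
  (A ∩ B).Nonempty ∧ interior A ∩ interior B = ∅

/-- The line `{x | f x = c}` (for `f ≠ 0`) is tangent to `A`:
it meets `A` and `A` lies in one of the two closed half-planes it bounds. -/
def TangentLineTo (f : Plane →ₗ[ℝ] ℝ) (c : ℝ) (A : Set Plane) : Prop :=
  (∃ x ∈ A, f x = c) ∧ ((∀ x ∈ A, f x ≤ c) ∨ (∀ x ∈ A, c ≤ f x))

/-- No line is tangent to three distinct members of the family. -/
def NoTripleTangentLine (F : Set (Set Plane)) : Prop :=
  ∀ f : Plane →ₗ[ℝ] ℝ, f ≠ 0 → ∀ c : ℝ, ∀ A ∈ F, ∀ B ∈ F, ∀ C ∈ F,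
    A ≠ B → B ≠ C → A ≠ C →
    ¬ (TangentLineTo f c A ∧ TangentLineTo f c B ∧ TangentLineTo f c C)

/-- The ordered triple `(A₁, A₂, A₃)` is counterclockwise oriented. -/
def CCWOriented (A₁ A₂ A₃ : Set Plane) : Prop :=
  ∃ a₁ ∈ A₁ ∩ frontier (convexHull ℝ (A₁ ∪ A₂ ∪ A₃)),
  ∃ a₂ ∈ A₂ ∩ frontier (convexHull ℝ (A₁ ∪ A₂ ∪ A₃)),
  ∃ a₃ ∈ A₃ ∩ frontier (convexHull ℝ (A₁ ∪ A₂ ∪ A₃)),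
    0 < det2 (a₂ - a₁) (a₃ - a₁)

/-- The ordered triple `(A₁, A₂, A₃)` is clockwise oriented. -/
def CWOriented (A₁ A₂ A₃ : Set Plane) : Prop :=
  ∃ a₁ ∈ A₁ ∩ frontier (convexHull ℝ (A₁ ∪ A₂ ∪ A₃)),
  ∃ a₂ ∈ A₂ ∩ frontier (convexHull ℝ (A₁ ∪ A₂ ∪ A₃)),
  ∃ a₃ ∈ A₃ ∩ frontier (convexHull ℝ (A₁ ∪ A₂ ∪ A₃)),
    det2 (a₂ - a₁) (a₃ - a₁) < 0

/-- An affine line in the plane: an affine subspace with 1-dimensional direction. -/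
def IsLine (L : AffineSubspace ℝ Plane) : Prop := Module.finrank ℝ L.direction = 1

/-- `L` is a transversal line of the family `F`. -/
def TransversalLine (L : AffineSubspace ℝ Plane) (F : Set (Set Plane)) : Prop :=
  IsLine L ∧ ∀ A ∈ F, ((L : Set Plane) ∩ A).Nonempty

/-! ### Ramsey for pairs and triples -/

theorem ramsey2 {α : Type*} [LinearOrder α] : ∀ a b : ℕ, ∃ N : ℕ, ∀ (S : Finset α) (c : α → α → Prop),
    N ≤ S.card →
    (∃ T ⊆ S, T.card = a ∧ ∀ x ∈ T, ∀ y ∈ T, x < y → c x y) ∨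
    (∃ T ⊆ S, T.card = b ∧ ∀ x ∈ T, ∀ y ∈ T, x < y → ¬ c x y) := by
  classical
  intro a
  induction a with
  | zero => intro b; exact ⟨0, fun S c _ => Or.inl ⟨∅, by simp, by simp, by simp⟩⟩
  | succ a iha =>
    intro b
    induction b with
    | zero => exact ⟨0, fun S c _ => Or.inr ⟨∅, by simp, by simp, by simp⟩⟩
    | succ b ihb =>
      obtain ⟨N1, h1⟩ := iha (b+1)
      obtain ⟨N2, h2⟩ := ihb
      refine ⟨N1 + N2 + 1, fun S c hS => ?_⟩
      have hne : S.Nonempty := Finset.card_pos.1 (by omega)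
      set v := S.min' hne with hv
      have hvS : v ∈ S := S.min'_mem hne
      have hlt : ∀ x ∈ S.erase v, v < x := fun x hx =>
        lt_of_le_of_ne (S.min'_le x (Finset.mem_of_mem_erase hx)) (Finset.ne_of_mem_erase hx).symm
      have hcard := Finset.card_erase_of_mem hvS
      have hsum := Finset.card_filter_add_card_filter_not (s := S.erase v) (fun x => c v x)
      by_cases hc : N1 ≤ ((S.erase v).filter (fun x => c v x)).card
      · rcases h1 _ c hc with ⟨T, hT, hTc, hh⟩ | ⟨T, hT, hTc, hh⟩
        · left
          have hTS : ∀ x ∈ T, x ∈ S.erase v ∧ c v x := fun x hx => Finset.mem_filter.1 (hT hx)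
          refine ⟨insert v T, ?_, ?_, ?_⟩
          · intro x hx
            rcases Finset.mem_insert.1 hx with rfl | hx
            · exact hvS
            · exact Finset.mem_of_mem_erase (hTS x hx).1
          · rw [Finset.card_insert_of_notMem, hTc]
            intro h; exact absurd (hlt v (hTS v h).1) (lt_irrefl _)
          · intro x hx y hy hxy
            rcases Finset.mem_insert.1 hx with rfl | hx
            · rcases Finset.mem_insert.1 hy with rfl | hy
              · exact absurd hxy (lt_irrefl _)
              · exact (hTS y hy).2
            · rcases Finset.mem_insert.1 hy with rfl | hy
              · exact absurd (hxy.trans (hlt x (hTS x hx).1)) (lt_irrefl _)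
              · exact hh x hx y hy hxy
        · right
          exact ⟨T, fun x hx => Finset.mem_of_mem_erase (Finset.mem_filter.1 (hT hx)).1, hTc, hh⟩
      · have hc2 : N2 ≤ ((S.erase v).filter (fun x => ¬ c v x)).card := by omega
        rcases h2 _ c hc2 with ⟨T, hT, hTc, hh⟩ | ⟨T, hT, hTc, hh⟩
        · left
          exact ⟨T, fun x hx => Finset.mem_of_mem_erase (Finset.mem_filter.1 (hT hx)).1, hTc, hh⟩
        · right
          have hTS : ∀ x ∈ T, x ∈ S.erase v ∧ ¬ c v x := fun x hx => Finset.mem_filter.1 (hT hx)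
          refine ⟨insert v T, ?_, ?_, ?_⟩
          · intro x hx
            rcases Finset.mem_insert.1 hx with rfl | hx
            · exact hvS
            · exact Finset.mem_of_mem_erase (hTS x hx).1
          · rw [Finset.card_insert_of_notMem, hTc]
            intro h; exact absurd (hlt v (hTS v h).1) (lt_irrefl _)
          · intro x hx y hy hxy
            rcases Finset.mem_insert.1 hx with rfl | hx
            · rcases Finset.mem_insert.1 hy with rfl | hy
              · exact absurd hxy (lt_irrefl _)
              · exact (hTS y hy).2
            · rcases Finset.mem_insert.1 hy with rfl | hy
              · exact absurd (hxy.trans (hlt x (hTS x hx).1)) (lt_irrefl _)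
              · exact hh x hx y hy hxy

/-- Adding a new minimum to a homogeneous set. -/
theorem extend3 {α : Type*} [LinearOrder α] [DecidableEq α] (c : α → α → α → Prop) (v : α) (T : Finset α) (a : ℕ)
    (hT : T.card = a) (hv : ∀ x ∈ T, v < x)
    (h2 : ∀ x ∈ T, ∀ y ∈ T, x < y → c v x y)
    (h3 : ∀ x ∈ T, ∀ y ∈ T, ∀ z ∈ T, x < y → y < z → c x y z) :
    (insert v T).card = a + 1 ∧
    ∀ x ∈ insert v T, ∀ y ∈ insert v T, ∀ z ∈ insert v T, x < y → y < z → c x y z := by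
  constructor
  · rw [Finset.card_insert_of_notMem, hT]
    intro h; exact lt_irrefl _ (hv v h)
  · intro x hx y hy z hz hxy hyz
    have key : ∀ y ∈ insert v T, ∀ x ∈ insert v T, x < y → y ∈ T := by
      intro y hy x hx hxy
      rcases Finset.mem_insert.1 hy with rfl | hy
      · rcases Finset.mem_insert.1 hx with rfl | hx
        · exact absurd hxy (lt_irrefl _)
        · exact absurd (hxy.trans (hv x hx)) (lt_irrefl _)
      · exact hy
    have hy' := key y hy x hx hxy
    have hz' := key z hz y hy hyz
    rcases Finset.mem_insert.1 hx with rfl | hx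
    · exact h2 y hy' z hz' hyz
    · exact h3 x hx y hy' z hz' hxy hyz

theorem ramsey3 {α : Type*} [LinearOrder α] : ∀ a b : ℕ, ∃ N : ℕ, ∀ (S : Finset α) (c : α → α → α → Prop),
    N ≤ S.card →
    (∃ T ⊆ S, T.card = a ∧ ∀ x ∈ T, ∀ y ∈ T, ∀ z ∈ T, x < y → y < z → c x y z) ∨
    (∃ T ⊆ S, T.card = b ∧ ∀ x ∈ T, ∀ y ∈ T, ∀ z ∈ T, x < y → y < z → ¬ c x y z) := by
  classical
  intro a
  induction a with
  | zero => intro b; exact ⟨0, fun S c _ => Or.inl ⟨∅, by simp, by simp, by simp⟩⟩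
  | succ a iha =>
    intro b
    induction b with
    | zero => exact ⟨0, fun S c _ => Or.inr ⟨∅, by simp, by simp, by simp⟩⟩
    | succ b ihb =>
      obtain ⟨N1, h1⟩ := iha (b+1)
      obtain ⟨N2, h2⟩ := ihb
      obtain ⟨N, hN⟩ := ramsey2 (α := α) N1 N2
      refine ⟨N + 1, fun S c hS => ?_⟩
      have hne : S.Nonempty := Finset.card_pos.1 (by omega)
      set v := S.min' hne with hv
      have hvS : v ∈ S := S.min'_mem hne
      have hlt : ∀ x ∈ S.erase v, v < x := fun x hx =>
        lt_of_le_of_ne (S.min'_le x (Finset.mem_of_mem_erase hx)) (Finset.ne_of_mem_erase hx).symm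
      have hcard := Finset.card_erase_of_mem hvS
      rcases hN (S.erase v) (c v) (by omega) with ⟨U, hU, hUc, hUh⟩ | ⟨U, hU, hUc, hUh⟩
      · rcases h1 U c hUc.ge with ⟨T, hT, hTc, hh⟩ | ⟨T, hT, hTc, hh⟩
        · left
          obtain ⟨e1, e2⟩ := extend3 c v T a hTc (fun x hx => hlt x (hU (hT hx)))
            (fun x hx y hy => hUh x (hT hx) y (hT hy)) hh
          exact ⟨insert v T, Finset.insert_subset hvS
            (fun x hx => Finset.mem_of_mem_erase (hU (hT hx))), e1, e2⟩
        · right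
          exact ⟨T, fun x hx => Finset.mem_of_mem_erase (hU (hT hx)), hTc, hh⟩
      · rcases h2 U c hUc.ge with ⟨T, hT, hTc, hh⟩ | ⟨T, hT, hTc, hh⟩
        · left
          exact ⟨T, fun x hx => Finset.mem_of_mem_erase (hU (hT hx)), hTc, hh⟩
        · right
          obtain ⟨e1, e2⟩ := extend3 (fun x y z => ¬ c x y z) v T b hTc
            (fun x hx => hlt x (hU (hT hx)))
            (fun x hx y hy => hUh x (hT hx) y (hT hy)) hh
          exact ⟨insert v T, Finset.insert_subset hvS
            (fun x hx => Finset.mem_of_mem_erase (hU (hT hx))), e1, e2⟩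

/-! ### One-dimensional Helly with a one-sided constraint -/

theorem helly_left {X ι κ : Type*} [LinearOrder X] (J : Finset ι) (hJ : J.Nonempty) (K : Finset κ)
    (S : ι → Set X) (T : κ → Set X) (hS : ∀ j ∈ J, (S j).OrdConnected)
    (hp : ∀ j ∈ J, ∀ j' ∈ J, (S j ∩ S j').Nonempty)
    (hl : ∀ j ∈ J, ∀ k ∈ K, ∃ x ∈ S j, ∀ t ∈ T k, x < t) :
    ∃ y, (∀ j ∈ J, y ∈ S j) ∧ ∀ k ∈ K, ∀ t ∈ T k, y < t := by
  classical
  have hX : Nonempty X := by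
    obtain ⟨j, hj⟩ := hJ
    obtain ⟨x, _⟩ := hp j hj j hj
    exact ⟨x⟩
  have hm : ∀ j ∈ J, ∃ m ∈ S j, (∀ k ∈ K, ∀ t ∈ T k, m < t) ∧
      ∀ j' ∈ J, ∃ z ∈ S j ∩ S j', m ≤ z := by
    intro j hj
    have hx : ∃ x ∈ S j, ∀ k ∈ K, ∀ t ∈ T k, x < t := by
      rcases K.eq_empty_or_nonempty with rfl | hK
      · obtain ⟨x, hx, _⟩ := hp j hj j hj
        exact ⟨x, hx, by simp⟩
      · choose! f hf1 hf2 using hl j hj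
        obtain ⟨k0, hk0, hmin⟩ := K.exists_min_image f hK
        exact ⟨f k0, hf1 k0 hk0, fun k hk t ht => (hmin k hk).trans_lt (hf2 k hk t ht)⟩
    obtain ⟨x, hx1, hx2⟩ := hx
    choose! z hz using fun j' hj' => hp j hj j' hj'
    obtain ⟨j0, hj0, hmin⟩ := J.exists_min_image z hJ
    refine ⟨min x (z j0), ?_, ?_, ?_⟩
    · rcases min_choice x (z j0) with h | h <;> rw [h]
      · exact hx1
      · exact (hz j0 hj0).1
    · exact fun k hk t ht => (min_le_left _ _).trans_lt (hx2 k hk t ht)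
    · exact fun j' hj' => ⟨z j', hz j' hj', (min_le_right _ _).trans (hmin j' hj')⟩
  choose! m hm1 hm2 hm3 using hm
  obtain ⟨j0, hj0, hmax⟩ := J.exists_max_image m hJ
  refine ⟨m j0, fun j hj => ?_, hm2 j0 hj0⟩
  obtain ⟨z, hz, hle⟩ := hm3 j0 hj0 j hj
  exact (hS j hj).out (hm1 j hj) hz.2 ⟨hmax j hj, hle⟩

/-! ### Support functions -/

/-- The linear functional in direction `t`. -/
def dotp (t : ℝ) (x : Plane) : ℝ := Real.cos t * x 0 + Real.sin t * x 1

/-- The support function. -/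
def supp (A : Set Plane) (t : ℝ) : ℝ := sSup (dotp t '' A)

theorem dotp_cont (t : ℝ) : Continuous (dotp t) := by
  unfold dotp; fun_prop

theorem supp_attained {A : Set Plane} (hA : ConvexBody2 A) (t : ℝ) :
    ∃ a ∈ A, dotp t a = supp A t :=
  (hA.2.1.image (dotp_cont t)).sSup_mem (hA.1.image _)

theorem le_supp {A : Set Plane} (hA : ConvexBody2 A) (t : ℝ) {a : Plane} (ha : a ∈ A) :
    dotp t a ≤ supp A t :=
  le_csSup (hA.2.1.image (dotp_cont t)).bddAbove (mem_image_of_mem _ ha)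

theorem supp_add (A : Set Plane) (t : ℝ) : supp A (t + 2 * Real.pi) = supp A t := by
  have : dotp (t + 2 * Real.pi) = dotp t := by
    ext x; simp [dotp]
  simp [supp, this]

/-- conic combination identity -/
theorem conic (a b c x y : ℝ) :
    Real.sin (c - a) * (Real.cos b * x + Real.sin b * y) =
    Real.sin (c - b) * (Real.cos a * x + Real.sin a * y) +
    Real.sin (b - a) * (Real.cos c * x + Real.sin c * y) := by
  have h1 := Real.sin_sq_add_cos_sq a
  have h2 := Real.sin_sq_add_cos_sq b
  have h3 := Real.sin_sq_add_cos_sq c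
  simp only [Real.sin_sub]
  ring

theorem lagr (u v d0 d1 x0 x1 : ℝ) :
    (Real.cos u * x0 + Real.sin u * x1) * (Real.cos v * d0 + Real.sin v * d1)
    - (Real.cos u * d0 + Real.sin u * d1) * (Real.cos v * x0 + Real.sin v * x1)
    = Real.sin (u - v) * (d0 * x1 - d1 * x0) := by
  simp only [Real.sin_sub]
  ring

theorem side (v1 u v2 d0 d1 x0 x1 : ℝ) (h1 : v1 < u) (h2 : u < v2) (h3 : v2 < v1 + 2 * Real.pi)
    (hux : 0 < Real.cos u * x0 + Real.sin u * x1)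
    (huy : 0 < Real.cos u * (x0 + d0) + Real.sin u * (x1 + d1))
    (hvx : Real.cos v1 * x0 + Real.sin v1 * x1 < 0)
    (hvy : Real.cos v2 * (x0 + d0) + Real.sin v2 * (x1 + d1) ≤ 0)
    (hd1 : 0 ≤ Real.cos v1 * d0 + Real.sin v1 * d1)
    (hd2 : Real.cos v2 * d0 + Real.sin v2 * d1 < 0) :
    0 < d0 * x1 - d1 * x0 := by
  rcases le_or_gt (Real.cos u * d0 + Real.sin u * d1) 0 with hu | hu
  · have hs : 0 ≤ Real.sin (v2 - u) := by
      by_contra hneg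
      have hpi : Real.pi < v2 - u := by
        by_contra hh
        exact hneg (Real.sin_nonneg_of_nonneg_of_le_pi (by linarith) (by linarith))
      have e := conic v2 (v1 + 2 * Real.pi) (u + 2 * Real.pi) d0 d1
      rw [Real.cos_add_two_pi, Real.sin_add_two_pi, Real.cos_add_two_pi, Real.sin_add_two_pi] at e
      have s1 : 0 < Real.sin (u + 2 * Real.pi - v2) :=
        Real.sin_pos_of_pos_of_lt_pi (by linarith) (by linarith)
      have s2 : 0 < Real.sin (u + 2 * Real.pi - (v1 + 2 * Real.pi)) :=
        Real.sin_pos_of_pos_of_lt_pi (by linarith) (by linarith)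
      have s3 : 0 < Real.sin (v1 + 2 * Real.pi - v2) :=
        Real.sin_pos_of_pos_of_lt_pi (by linarith) (by linarith)
      have := mul_nonneg s1.le hd1
      have := mul_neg_of_pos_of_neg s2 hd2
      have := mul_nonpos_of_nonneg_of_nonpos s3.le hu
      linarith
    have e := lagr v2 u d0 d1 (x0 + d0) (x1 + d1)
    have t1 := mul_nonneg_of_nonpos_of_nonpos hvy hu
    have t2 := mul_neg_of_neg_of_pos hd2 huy
    have : 0 < Real.sin (v2 - u) * (d0 * (x1 + d1) - d1 * (x0 + d0)) := by linarith
    have := pos_of_mul_pos_right this hs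
    linarith
  · have hs : 0 ≤ Real.sin (u - v1) := by
      by_contra hneg
      have hpi : Real.pi < u - v1 := by
        by_contra hh
        exact hneg (Real.sin_nonneg_of_nonneg_of_le_pi (by linarith) (by linarith))
      have e := conic u v2 (v1 + 2 * Real.pi) d0 d1
      rw [Real.cos_add_two_pi, Real.sin_add_two_pi] at e
      have s1 : 0 < Real.sin (v1 + 2 * Real.pi - u) :=
        Real.sin_pos_of_pos_of_lt_pi (by linarith) (by linarith)
      have s2 : 0 < Real.sin (v1 + 2 * Real.pi - v2) :=
        Real.sin_pos_of_pos_of_lt_pi (by linarith) (by linarith)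
      have s3 : 0 < Real.sin (v2 - u) :=
        Real.sin_pos_of_pos_of_lt_pi (by linarith) (by linarith)
      have := mul_neg_of_pos_of_neg s1 hd2
      have := mul_pos s2 hu
      have := mul_nonneg s3.le hd1
      linarith
    have e := lagr u v1 d0 d1 x0 x1
    have t1 := mul_nonneg hux.le hd1
    have t2 := mul_neg_of_pos_of_neg hu hvx
    have : 0 < Real.sin (u - v1) * (d0 * x1 - d1 * x0) := by linarith
    exact pos_of_mul_pos_right this hs

/-- If `v1, v2` both are nonpositive on `x` and `y` (one of them strictly), then `u1, u2` from the
two complementary arcs cannot be both positive. -/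
theorem cone_contra (u1 v1 u2 v2 x0 x1 y0 y1 : ℝ) (h1 : u1 < v1) (h2 : v1 < u2) (h3 : u2 < v2)
    (h4 : v2 < u1 + 2 * Real.pi)
    (hu1 : 0 < Real.cos u1 * x0 + Real.sin u1 * x1)
    (hu2 : 0 < Real.cos u2 * y0 + Real.sin u2 * y1)
    (hx1 : Real.cos v1 * x0 + Real.sin v1 * x1 < 0)
    (hy1 : Real.cos v1 * y0 + Real.sin v1 * y1 < 0)
    (hx2 : Real.cos v2 * x0 + Real.sin v2 * x1 ≤ 0)
    (hy2 : Real.cos v2 * y0 + Real.sin v2 * y1 ≤ 0) : False := by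
  rcases lt_trichotomy (v2 - v1) Real.pi with h | h | h
  · have e := conic v1 u2 v2 y0 y1
    have s1 : 0 < Real.sin (v2 - v1) := Real.sin_pos_of_pos_of_lt_pi (by linarith) (by linarith)
    have s2 : 0 < Real.sin (v2 - u2) := Real.sin_pos_of_pos_of_lt_pi (by linarith) (by linarith)
    have s3 : 0 < Real.sin (u2 - v1) := Real.sin_pos_of_pos_of_lt_pi (by linarith) (by linarith)
    have := mul_pos s1 hu2
    have := mul_neg_of_pos_of_neg s2 hy1
    have := mul_nonpos_of_nonneg_of_nonpos s3.le hy2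
    linarith
  · have : v2 = v1 + Real.pi := by linarith
    rw [this, Real.cos_add_pi, Real.sin_add_pi] at hx2
    linarith
  · have e := conic v2 (u1 + 2 * Real.pi) (v1 + 2 * Real.pi) x0 x1
    rw [Real.cos_add_two_pi, Real.sin_add_two_pi, Real.cos_add_two_pi, Real.sin_add_two_pi] at e
    have s1 : 0 < Real.sin (v1 + 2 * Real.pi - v2) :=
      Real.sin_pos_of_pos_of_lt_pi (by linarith) (by linarith)
    have s2 : 0 < Real.sin (v1 + 2 * Real.pi - (u1 + 2 * Real.pi)) :=
      Real.sin_pos_of_pos_of_lt_pi (by linarith) (by linarith)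
    have s3 : 0 < Real.sin (u1 + 2 * Real.pi - v2) :=
      Real.sin_pos_of_pos_of_lt_pi (by linarith) (by linarith)
    have := mul_pos s1 hu1
    have := mul_nonpos_of_nonneg_of_nonpos s2.le hx2
    have := mul_neg_of_pos_of_neg s3 hx1
    linarith

theorem line_param (d0 d1 p q p' q' : ℝ) (hd : 0 < d0 * q' - d1 * p') (h : d0 * q - d1 * p = 0) :
    ∃ s, p = s * d0 ∧ q = s * d1 := by
  have hq : 0 < d0 ^ 2 + d1 ^ 2 := by
    by_contra hcon
    have e0 : d0 = 0 := by nlinarith [sq_nonneg d0, sq_nonneg d1]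
    have e1 : d1 = 0 := by nlinarith [sq_nonneg d0, sq_nonneg d1]
    rw [e0, e1] at hd; linarith
  have hsd : (d0 * p + d1 * q) / (d0 ^ 2 + d1 ^ 2) * (d0 ^ 2 + d1 ^ 2) = d0 * p + d1 * q := by
    field_simp
  refine ⟨(d0 * p + d1 * q) / (d0 ^ 2 + d1 ^ 2), ?_, ?_⟩
  · apply mul_right_cancel₀ hq.ne'
    linear_combination (-d0) * hsd - d1 * h
  · apply mul_right_cancel₀ hq.ne'
    linear_combination (-d1) * hsd + d0 * h

set_option maxHeartbeats 1000000 in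
theorem alt0 {A B : Set Plane} (hA : ConvexBody2 A) (hB : ConvexBody2 B)
    (hc : IsPreconnected (A \ B)) (u1 v1 u2 v2 : ℝ) (h1 : u1 < v1) (h2 : v1 < u2) (h3 : u2 < v2)
    (h4 : v2 < u1 + 2 * Real.pi) (hu1 : supp B u1 < supp A u1) (hu2 : supp B u2 < supp A u2)
    (hv1 : supp A v1 < supp B v1) (hv2 : supp A v2 ≤ supp B v2) : False := by
  obtain ⟨b1, hb1, eb1⟩ := supp_attained hB v1
  obtain ⟨b2, hb2, eb2⟩ := supp_attained hB v2
  obtain ⟨a1, ha1, ea1⟩ := supp_attained hA u1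
  obtain ⟨a2, ha2, ea2⟩ := supp_attained hA u2
  have k1 := le_supp hB u1 hb1
  have k2 := le_supp hB u2 hb1
  have k3 := le_supp hB u1 hb2
  have k4 := le_supp hB u2 hb2
  have k5 := le_supp hA v1 ha1
  have k6 := le_supp hA v1 ha2
  have k7 := le_supp hA v2 ha1
  have k8 := le_supp hA v2 ha2
  have k9 := le_supp hB v1 hb2
  have k10 := le_supp hB v2 hb1
  have n1 : a1 ∉ B := fun h => by have := le_supp hB u1 h; linarith
  have n2 : a2 ∉ B := fun h => by have := le_supp hB u2 h; linarith
  rcases k10.lt_or_eq with k10 | k10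
  · have g2 : 0 < (b1 0 - b2 0) * (a2 1 - b1 1) - (b1 1 - b2 1) * (a2 0 - b1 0) := by
      unfold dotp at *
      apply side v1 u2 v2 <;> linarith
    have g1 : 0 < (b1 0 - b2 0) * (-(a1 1 - b1 1)) - (-(b1 1 - b2 1)) * (a1 0 - b1 0) := by
      unfold dotp at *
      apply side (-v1) (-u1) (-v2 + 2 * Real.pi) <;>
        try simp only [Real.cos_add_two_pi, Real.sin_add_two_pi, Real.cos_neg, Real.sin_neg]
      all_goals linarith
    let w : Plane → ℝ := fun x => (b1 0 - b2 0) * (x 1 - b1 1) - (b1 1 - b2 1) * (x 0 - b1 0)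
    have hw : Continuous w := by unfold w; fun_prop
    obtain ⟨c, hcm, hc0⟩ := hc.intermediate_value (a := a1) (b := a2) ⟨ha1, n1⟩ ⟨ha2, n2⟩
      hw.continuousOn (show (0:ℝ) ∈ Icc (w a1) (w a2) from ⟨by simp only [w]; linarith, g2.le⟩)
    simp only [w] at hc0
    obtain ⟨s, c0, c1⟩ := line_param (b1 0 - b2 0) (b1 1 - b2 1) (c 0 - b1 0) (c 1 - b1 1) _ _ g2 hc0
    have m1 := le_supp hA v1 hcm.1
    have m2 := le_supp hA v2 hcm.1
    have hs0 : s ≤ 0 := by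
      by_contra hcon
      push Not at hcon
      have : dotp v1 c - dotp v1 b1 = s * (dotp v1 b1 - dotp v1 b2) := by
        simp only [dotp]
        linear_combination Real.cos v1 * c0 + Real.sin v1 * c1
      have := mul_nonneg hcon.le (show 0 ≤ dotp v1 b1 - dotp v1 b2 by linarith)
      linarith
    have hs1 : -1 ≤ s := by
      by_contra hcon
      push Not at hcon
      have : dotp v2 c - dotp v2 b2 = (s + 1) * (dotp v2 b1 - dotp v2 b2) := by
        simp only [dotp]
        linear_combination Real.cos v2 * c0 + Real.sin v2 * c1
      have := mul_pos_of_neg_of_neg (show s + 1 < 0 by linarith)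
        (show dotp v2 b1 - dotp v2 b2 < 0 by linarith)
      linarith
    apply hcm.2
    have hcomb := hB.2.2 hb1 hb2 (show 0 ≤ 1 + s by linarith) (show 0 ≤ -s by linarith) (by ring)
    convert hcomb using 1
    ext i
    fin_cases i
    · simp; linear_combination c0
    · simp; linear_combination c1
  · unfold dotp at *
    apply cone_contra u1 v1 u2 v2 (a1 0 - b1 0) (a1 1 - b1 1) (a2 0 - b1 0) (a2 1 - b1 1) h1 h2 h3 h4
      <;> linarith

/-- Separation of a point from a compact convex set by a direction. -/
theorem sep {K : Set Plane} (hK : IsCompact K) (hc : Convex ℝ K) (hne : K.Nonempty) {a : Plane} (ha : a ∉ K)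
    (t0 : ℝ) : ∃ t ∈ Ico t0 (t0 + 2 * Real.pi), ∀ b ∈ K, dotp t b < dotp t a := by
  obtain ⟨f, s, h1, h2⟩ := geometric_hahn_banach_point_closed hc hK.isClosed ha
  have hf : ∀ x : Plane, f x = f (EuclideanSpace.single 0 1) * x 0 + f (EuclideanSpace.single 1 1) * x 1 := by
    intro x
    have : x = x 0 • EuclideanSpace.single (0 : Fin 2) (1:ℝ) + x 1 • EuclideanSpace.single (1 : Fin 2) (1:ℝ) := by
      ext i; fin_cases i <;> simp
    conv_lhs => rw [this]
    rw [map_add, map_smul, map_smul, smul_eq_mul, smul_eq_mul]; ring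
  set p := f (EuclideanSpace.single 0 1)
  set q := f (EuclideanSpace.single 1 1)
  let z : ℂ := ⟨-p, -q⟩
  have hz0 : z ≠ 0 := by
    intro h
    have hp : -p = 0 := congrArg Complex.re h
    have hq : -q = 0 := congrArg Complex.im h
    obtain ⟨b, hb⟩ := hne
    have := h2 b hb
    rw [hf] at h1 this
    have hp' : p = 0 := by linarith
    have hq' : q = 0 := by linarith
    rw [hp', hq'] at h1 this
    linarith
  have hr : 0 < ‖z‖ := norm_pos_iff.2 hz0
  have hre : ‖z‖ * Real.cos z.arg = -p := Complex.norm_mul_cos_arg z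
  have him : ‖z‖ * Real.sin z.arg = -q := Complex.norm_mul_sin_arg z
  refine ⟨toIcoMod Real.two_pi_pos t0 z.arg, toIcoMod_mem_Ico _ _ _, fun b hb => ?_⟩
  have hper : ∀ x, dotp (toIcoMod Real.two_pi_pos t0 z.arg) x = dotp z.arg x := by
    intro x
    rw [toIcoMod, zsmul_eq_mul, dotp, dotp, Real.cos_sub_int_mul_two_pi, Real.sin_sub_int_mul_two_pi]
  rw [hper, hper]
  have hlin : ∀ x, ‖z‖ * dotp z.arg x = - f x := by
    intro x
    rw [hf, dotp]
    linear_combination x 0 * hre + x 1 * him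
  have := h2 b hb
  have e1 := hlin a
  have e2 := hlin b
  exact lt_of_mul_lt_mul_left (by linarith) hr.le

theorem alt {A B : Set Plane} (hA : ConvexBody2 A) (hB : ConvexBody2 B)
    (hc : NoncrossingPair A B) (u1 v1 u2 v2 : ℝ) (h1 : u1 < v1) (h2 : v1 < u2) (h3 : u2 < v2)
    (h4 : v2 < u1 + 2 * Real.pi) (hu1 : supp B u1 < supp A u1) (hu2 : supp B u2 < supp A u2)
    (hv1 : supp A v1 ≤ supp B v1) (hv2 : supp A v2 ≤ supp B v2) : False := by
  obtain ⟨b, hbB, hbA⟩ := hc.2.nonempty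
  obtain ⟨w, hw, hw2⟩ := sep hA.2.1 hA.2.2 hA.1 hbA u1
  have hws : supp A w < supp B w := by
    obtain ⟨a, ha, e⟩ := supp_attained hA w
    have := hw2 a ha
    have := le_supp hB w hbB
    linarith
  have hwu1 : u1 < w := lt_of_le_of_ne hw.1 (by rintro rfl; linarith)
  rcases lt_trichotomy w u2 with h | h | h
  · exact alt0 hA hB hc.1.isPreconnected u1 w u2 v2 hwu1 h h3 h4 hu1 hu2 hws hv2
  · subst h; linarith
  · refine alt0 hA hB hc.1.isPreconnected u2 w (u1 + 2 * Real.pi) (v1 + 2 * Real.pi) h hw.2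
      (by linarith) (by linarith) hu2 ?_ hws ?_
    · rwa [supp_add, supp_add]
    · rwa [supp_add, supp_add]

/-! ### Convex position via support functions -/

theorem convexPos_of {G : Set (Set Plane)} (hG : ∀ A ∈ G, ConvexBody2 A)
    (h : ∀ A ∈ G, ∃ t, ∀ B ∈ G, B ≠ A → supp B t < supp A t) : ConvexPos G := by
  intro A hA heq
  obtain ⟨t, ht⟩ := h A hA
  obtain ⟨a, ha, ea⟩ := supp_attained (hG A hA) t
  have hmem : a ∈ convexHull ℝ (⋃₀ (G \ {A})) := by
    rw [← heq]; exact subset_convexHull ℝ _ (mem_sUnion_of_mem ha hA)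
  have hsub : convexHull ℝ (⋃₀ (G \ {A})) ⊆ {x | dotp t x < dotp t a} := by
    apply convexHull_min
    · rintro x ⟨B, ⟨hB, hBA⟩, hx⟩
      have := le_supp (hG B hB) t hx
      have := ht B hB hBA
      simp only [mem_ofPred_eq]; linarith
    · apply convex_halfSpace_lt
      constructor
      · intro x y; simp [dotp]; ring
      · intro c x; simp [dotp]; ring
  have := hsub hmem
  simp at this

theorem hull_compact {B C : Set Plane} (hB : ConvexBody2 B) (hC : ConvexBody2 C) :
    IsCompact (convexHull ℝ (B ∪ C)) := by
  rw [hB.2.2.convexHull_union hC.2.2 hB.1 hC.1]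
  have : convexJoin ℝ B C = (fun q : (Plane × Plane) × ℝ => (1 - q.2) • q.1.1 + q.2 • q.1.2) ''
      ((B ×ˢ C) ×ˢ Icc (0:ℝ) 1) := by
    ext x
    simp only [mem_convexJoin, segment_eq_image, mem_image, Prod.exists, mem_prod]
    constructor
    · rintro ⟨a, ha, b, hb, t, ht, e⟩
      exact ⟨a, b, t, ⟨⟨ha, hb⟩, ht⟩, e⟩
    · rintro ⟨a, b, t, ⟨⟨ha, hb⟩, ht⟩, e⟩
      exact ⟨a, ha, b, hb, t, ht, e⟩
  rw [this]
  exact ((hB.2.1.prod hC.2.1).prod isCompact_Icc).image (by fun_prop)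

theorem triple {F : Set (Set Plane)} (hF : ∀ A ∈ F, ConvexBody2 A) (hg : GenPos F)
    {A B C : Set Plane} (hA : A ∈ F) (hB : B ∈ F) (hC : C ∈ F) (hAB : A ≠ B) (hAC : A ≠ C)
    (hBC : B ≠ C) : ∃ t ∈ Ico (0:ℝ) (2 * Real.pi), supp B t < supp A t ∧ supp C t < supp A t := by
  have hG : ({A, B, C} : Set (Set Plane)) ⊆ F := by
    rintro X (rfl | rfl | rfl) <;> assumption
  have hn := hg _ hG (Set.ncard_eq_three.2 ⟨A, B, C, hAB, hAC, hBC, rfl⟩) A (by simp)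
  have e1 : ({A, B, C} : Set (Set Plane)) \ {A} = {B, C} := by
    ext X; simp only [mem_sdiff, mem_insert_iff, mem_singleton_iff]
    constructor
    · rintro ⟨h | h, h'⟩
      · exact absurd h h'
      · exact h
    · rintro (rfl | rfl)
      · exact ⟨by simp, hAB.symm⟩
      · exact ⟨by simp, hAC.symm⟩
  rw [e1, sUnion_insert, sUnion_pair] at hn
  have hex : ∃ a ∈ A, a ∉ convexHull ℝ (B ∪ C) := by
    by_contra hcon
    push Not at hcon
    apply hn
    apply Subset.antisymm
    · apply convexHull_min _ (convex_convexHull ℝ _)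
      exact union_subset hcon (subset_convexHull ℝ _)
    · exact convexHull_mono subset_union_right
  obtain ⟨a, ha, hna⟩ := hex
  obtain ⟨t, ht, h⟩ := sep (hull_compact (hF B hB) (hF C hC)) (convex_convexHull ℝ _)
    ((hF B hB).1.mono (subset_union_left.trans (subset_convexHull ℝ _))) hna 0
  rw [zero_add] at ht
  have hle := le_supp (hF A hA) t ha
  refine ⟨t, ht, ?_, ?_⟩
  · obtain ⟨b, hb, e⟩ := supp_attained (hF B hB) t
    have := h b (subset_convexHull ℝ _ (Or.inl hb)); linarith
  · obtain ⟨b, hb, e⟩ := supp_attained (hF C hC) t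
    have := h b (subset_convexHull ℝ _ (Or.inr hb)); linarith

/-- Directions (other than `0`) in which `A` strictly beats `B`. -/
def Sset (A B : Set Plane) : Set ℝ := {t | t ∈ Ioo 0 (2 * Real.pi) ∧ supp B t < supp A t}

/-- Directions (other than `0`) in which `A` weakly beats `B`. -/
def Tset (A B : Set Plane) : Set ℝ := {t | t ∈ Ioo 0 (2 * Real.pi) ∧ supp B t ≤ supp A t}

theorem supp_two_pi (A : Set Plane) : supp A (2 * Real.pi) = supp A 0 := by
  have := supp_add A 0; rwa [zero_add] at this

theorem Sset_ord {A B : Set Plane} (hA : ConvexBody2 A) (hB : ConvexBody2 B)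
    (hc : NoncrossingPair A B) (h0 : supp A 0 ≤ supp B 0) : (Sset A B).OrdConnected := by
  constructor
  rintro x ⟨hx, hx2⟩ z ⟨hz, hz2⟩ y ⟨hy1, hy2⟩
  refine ⟨⟨hx.1.trans_le hy1, hy2.trans_lt hz.2⟩, ?_⟩
  by_contra hcon
  push Not at hcon
  have l1 : x < y := lt_of_le_of_ne hy1 (by rintro rfl; linarith)
  have l2 : y < z := lt_of_le_of_ne hy2 (by rintro rfl; linarith)
  refine alt hA hB hc x y z (2 * Real.pi) l1 l2 hz.2 (by linarith [hx.1]) hx2 hz2 hcon ?_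
  rwa [supp_two_pi, supp_two_pi]

theorem Tset_ord {A B : Set Plane} (hA : ConvexBody2 A) (hB : ConvexBody2 B)
    (hc : NoncrossingPair A B) (h0 : supp A 0 < supp B 0) : (Tset A B).OrdConnected := by
  constructor
  rintro x ⟨hx, hx2⟩ z ⟨hz, hz2⟩ y ⟨hy1, hy2⟩
  refine ⟨⟨hx.1.trans_le hy1, hy2.trans_lt hz.2⟩, ?_⟩
  by_contra hcon
  push Not at hcon
  have l1 : x < y := lt_of_le_of_ne hy1 (by rintro rfl; linarith)
  have l2 : y < z := lt_of_le_of_ne hy2 (by rintro rfl; linarith)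
  exact alt hB hA ⟨hc.2, hc.1⟩ 0 x y z hx.1 l1 l2 (by linarith [hz.2]) h0 hcon hx2 hz2

theorem Sset_inter {F : Set (Set Plane)} (hF : ∀ A ∈ F, ConvexBody2 A) (hg : GenPos F)
    {A B C : Set Plane} (hA : A ∈ F) (hB : B ∈ F) (hC : C ∈ F) (hAB : A ≠ B) (hAC : A ≠ C)
    (hBC : B ≠ C) (h0 : supp A 0 ≤ supp B 0) : (Sset A B ∩ Sset A C).Nonempty := by
  obtain ⟨t, ht, h1, h2⟩ := triple hF hg hA hB hC hAB hAC hBC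
  have : 0 < t := lt_of_le_of_ne ht.1 (by rintro rfl; linarith)
  exact ⟨t, ⟨⟨this, ht.2⟩, h1⟩, ⟨⟨this, ht.2⟩, h2⟩⟩

/-- pairwise intersections, including the diagonal, in a family with at least three members -/
theorem Sset_inter' {F : Set (Set Plane)} (hF : ∀ A ∈ F, ConvexBody2 A) (hg : GenPos F)
    (h3 : 3 ≤ F.ncard)
    {A B C : Set Plane} (hA : A ∈ F) (hB : B ∈ F) (hC : C ∈ F) (hAB : A ≠ B) (hAC : A ≠ C)
    (h0 : supp A 0 ≤ supp B 0) : (Sset A B ∩ Sset A C).Nonempty := by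
  by_cases hBC : B = C
  · subst hBC
    have : ∃ D ∈ F, D ∉ ({A, B} : Set (Set Plane)) := by
      apply Set.exists_mem_notMem_of_ncard_lt_ncard _ (by simp)
      have := Set.ncard_pair hAB
      omega
    obtain ⟨D, hD, hDn⟩ := this
    simp only [mem_insert_iff, mem_singleton_iff, not_or] at hDn
    obtain ⟨t, ht, _⟩ := Sset_inter hF hg hA hB hD hAB (Ne.symm hDn.1) (Ne.symm hDn.2) h0
    exact ⟨t, ht, ht⟩
  · exact Sset_inter hF hg hA hB hC hAB hAC hBC h0

/-- Colour of a triple. -/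
def LeftT (A B C : Set Plane) : Prop := ∃ x ∈ Sset B C, ∀ t ∈ Tset A B, x < t

def RightT (A B C : Set Plane) : Prop := ∃ x ∈ Sset B C, ∀ t ∈ Tset A B, t < x

theorem left_or_right {F : Set (Set Plane)} (hF : ∀ A ∈ F, ConvexBody2 A) (hg : GenPos F)
    (hp : F.Pairwise NoncrossingPair)
    {A B C : Set Plane} (hA : A ∈ F) (hB : B ∈ F) (hC : C ∈ F)
    (h1 : supp A 0 < supp B 0) (h2 : supp B 0 < supp C 0) : LeftT A B C ∨ RightT A B C := by
  have hAB : A ≠ B := by rintro rfl; exact lt_irrefl _ h1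
  have hBC : B ≠ C := by rintro rfl; exact lt_irrefl _ h2
  have hAC : A ≠ C := by rintro rfl; exact lt_irrefl _ (h1.trans h2)
  obtain ⟨x, hx, k1, k2⟩ := triple hF hg hB hC hA hBC hAB.symm hAC.symm
  have hx0 : 0 < x := lt_of_le_of_ne hx.1 (by rintro rfl; linarith)
  have hxS : x ∈ Sset B C := ⟨⟨hx0, hx.2⟩, k1⟩
  have hxT : x ∉ Tset A B := fun h => by have := h.2; linarith
  have hT := Tset_ord (hF A hA) (hF B hB) (hp hA hB hAB) h1
  by_cases h : ∀ t ∈ Tset A B, x < t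
  · exact Or.inl ⟨x, hxS, h⟩
  · right
    push Not at h
    obtain ⟨t, ht, htx⟩ := h
    refine ⟨x, hxS, fun s hs => ?_⟩
    by_contra hcon
    push Not at hcon
    exact hxT (hT.out ht hs ⟨htx, hcon⟩)

/-- The homogeneous situation. -/
theorem homog {F : Set (Set Plane)} (hF : ∀ A ∈ F, ConvexBody2 A) (hg : GenPos F)
    (hp : F.Pairwise NoncrossingPair) (h3 : 3 ≤ F.ncard) (f : ℝ → Set Plane) (T : Finset ℝ)
    (hf : ∀ r ∈ T, f r ∈ F ∧ supp (f r) 0 = r)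
    (hcol : (∀ x ∈ T, ∀ y ∈ T, ∀ z ∈ T, x < y → y < z → LeftT (f x) (f y) (f z)) ∨
      (∀ x ∈ T, ∀ y ∈ T, ∀ z ∈ T, x < y → y < z → RightT (f x) (f y) (f z))) :
    ∀ i ∈ T, ∃ t, ∀ j ∈ T, j ≠ i → supp (f j) t < supp (f i) t := by
  classical
  intro i hi
  set J := T.filter (fun j => i < j) with hJdef
  set K := T.filter (fun k => k < i) with hKdef
  have hinj : ∀ r ∈ T, ∀ s ∈ T, r ≠ s → f r ≠ f s := by
    intro r hr s hs hrs h
    apply hrs; rw [← (hf r hr).2, ← (hf s hs).2, h]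
  rcases J.eq_empty_or_nonempty with hJ | hJ
  · refine ⟨0, fun j hj hji => ?_⟩
    rw [(hf j hj).2, (hf i hi).2]
    by_contra hcon
    push Not at hcon
    have : j ∈ J := Finset.mem_filter.2 ⟨hj, lt_of_le_of_ne hcon hji.symm⟩
    rw [hJ] at this; simp at this
  have memJ : ∀ j ∈ J, j ∈ T ∧ i < j := fun j hj => Finset.mem_filter.1 hj
  have memK : ∀ j ∈ K, j ∈ T ∧ j < i := fun j hj => Finset.mem_filter.1 hj
  have le0 : ∀ j ∈ J, supp (f i) 0 ≤ supp (f j) 0 := by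
    intro j hj
    rw [(hf j (memJ j hj).1).2, (hf i hi).2]; exact (memJ j hj).2.le
  have hord : ∀ j ∈ J, (Sset (f i) (f j)).OrdConnected := by
    intro j hj
    have hjT := (memJ j hj).1
    exact Sset_ord (hF _ (hf i hi).1) (hF _ (hf j hjT).1)
      (hp (hf i hi).1 (hf j hjT).1 (hinj i hi j hjT (memJ j hj).2.ne)) (le0 j hj)
  have hpair : ∀ j ∈ J, ∀ j' ∈ J, (Sset (f i) (f j) ∩ Sset (f i) (f j')).Nonempty := by
    intro j hj j' hj'
    have hjT := (memJ j hj).1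
    have hjT' := (memJ j' hj').1
    exact Sset_inter' hF hg h3 (hf i hi).1 (hf j hjT).1 (hf j' hjT').1
      (hinj i hi j hjT (memJ j hj).2.ne) (hinj i hi j' hjT' (memJ j' hj').2.ne) (le0 j hj)
  have main : ∃ y, (∀ j ∈ J, y ∈ Sset (f i) (f j)) ∧ ∀ k ∈ K, y ∉ Tset (f k) (f i) := by
    rcases hcol with hcol | hcol
    · obtain ⟨y, hy1, hy2⟩ := helly_left J hJ K (fun j => Sset (f i) (f j))
        (fun k => Tset (f k) (f i)) hord hpair
        (fun j hj k hk => hcol k (memK k hk).1 i hi j (memJ j hj).1 (memK k hk).2 (memJ j hj).2)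
      exact ⟨y, hy1, fun k hk h => lt_irrefl _ (hy2 k hk y h)⟩
    · obtain ⟨y, hy1, hy2⟩ := helly_left (X := ℝᵒᵈ) J hJ K
        (fun j => OrderDual.ofDual ⁻¹' Sset (f i) (f j))
        (fun k => OrderDual.ofDual ⁻¹' Tset (f k) (f i)) (fun j hj => (hord j hj).dual) hpair
        (fun j hj k hk => hcol k (memK k hk).1 i hi j (memJ j hj).1 (memK k hk).2 (memJ j hj).2)
      exact ⟨OrderDual.ofDual y, hy1, fun k hk h => lt_irrefl _ (hy2 k hk y h)⟩
  obtain ⟨y, hy1, hy2⟩ := main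
  have hyI : y ∈ Ioo 0 (2 * Real.pi) := by
    obtain ⟨j, hj⟩ := hJ
    exact (hy1 j hj).1
  refine ⟨y, fun j hj hji => ?_⟩
  rcases lt_or_gt_of_ne hji with h | h
  · by_contra hcon
    push Not at hcon
    exact hy2 j (Finset.mem_filter.2 ⟨hj, h⟩) ⟨hyI, hcon⟩
  · exact (hy1 j (Finset.mem_filter.2 ⟨hj, h⟩)).2

/-- The case when all support values in direction `0` coincide. -/
theorem tie_case {F : Set (Set Plane)} (hF : ∀ A ∈ F, ConvexBody2 A) (hg : GenPos F)
    (hp : F.Pairwise NoncrossingPair) (h3 : 3 ≤ F.ncard) (G : Finset (Set Plane)) (hG : ∀ A ∈ G, A ∈ F)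
    (r : ℝ) (hr : ∀ A ∈ G, supp A 0 = r) :
    ∀ A ∈ G, ∃ t, ∀ B ∈ G, B ≠ A → supp B t < supp A t := by
  classical
  intro A hA
  rcases (G.erase A).eq_empty_or_nonempty with h | h
  · refine ⟨0, fun B hB hBA => ?_⟩
    have : B ∈ G.erase A := Finset.mem_erase.2 ⟨hBA, hB⟩
    rw [h] at this; simp at this
  have mem : ∀ B ∈ G.erase A, B ∈ G ∧ A ≠ B := fun B hB =>
    ⟨Finset.mem_of_mem_erase hB, (Finset.ne_of_mem_erase hB).symm⟩
  have le0 : ∀ B ∈ G.erase A, supp A 0 ≤ supp B 0 := fun B hB => by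
    rw [hr A hA, hr B (mem B hB).1]
  obtain ⟨y, hy, _⟩ := helly_left (G.erase A) h (∅ : Finset ℕ) (fun B => Sset A B) (fun _ => (∅ : Set ℝ))
    (fun B hB => Sset_ord (hF A (hG A hA)) (hF B (hG B (mem B hB).1))
      (hp (hG A hA) (hG B (mem B hB).1) (mem B hB).2) (le0 B hB))
    (fun B hB C hC => Sset_inter' hF hg h3 (hG A hA) (hG B (mem B hB).1) (hG C (mem C hC).1)
      (mem B hB).2 (mem C hC).2 (le0 B hB))
    (by simp)
  exact ⟨y, fun B hB hBA => (hy B (Finset.mem_erase.2 ⟨hBA, hB⟩)).2⟩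

/-- Pach–Tóth: Erdős–Szekeres for noncrossing convex bodies. -/
theorem erdos_szekeres_noncrossing_bodies :
    ∀ n : ℕ, 3 ≤ n → ∃ M : ℕ, ∀ F : Set (Set Plane), F.Finite → M ≤ F.ncard →
      (∀ A ∈ F, ConvexBody2 A) → F.Pairwise NoncrossingPair → GenPos F →
      ∃ G ⊆ F, G.ncard = n ∧ ConvexPos G := by
  classical
  intro n hn
  obtain ⟨N, hN⟩ := ramsey3 (α := ℝ) n n
  refine ⟨N * n + 3, fun F hfin hM hF hp hg => ?_⟩
  have h3 : 3 ≤ F.ncard := by omega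
  set Φ := hfin.toFinset with hΦ
  have hmem : ∀ A, A ∈ Φ ↔ A ∈ F := fun A => hfin.mem_toFinset
  have hcard : Φ.card = F.ncard := (Set.ncard_eq_toFinset_card F hfin).symm
  -- it suffices to find a finset of bodies
  have finish : ∀ G : Finset (Set Plane), (∀ A ∈ G, A ∈ F) → G.card = n →
      (∀ A ∈ G, ∃ t, ∀ B ∈ G, B ≠ A → supp B t < supp A t) →
      ∃ G ⊆ F, G.ncard = n ∧ ConvexPos G := by
    intro G hG hGn h
    exact ⟨(G : Set (Set Plane)), hG, by rw [Set.ncard_coe_finset, hGn],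
      convexPos_of (fun A hA => hF A (hG A hA)) h⟩
  set S := Φ.image (fun A => supp A 0) with hS
  by_cases hSN : N ≤ S.card
  · have hsec : ∀ r ∈ S, ∃ A, A ∈ F ∧ supp A 0 = r := by
      intro r hr
      obtain ⟨A, hA, e⟩ := Finset.mem_image.1 hr
      exact ⟨A, (hmem A).1 hA, e⟩
    choose! f hf using hsec
    have conc : ∀ T ⊆ S, T.card = n →
        ((∀ x ∈ T, ∀ y ∈ T, ∀ z ∈ T, x < y → y < z → LeftT (f x) (f y) (f z)) ∨
        (∀ x ∈ T, ∀ y ∈ T, ∀ z ∈ T, x < y → y < z → RightT (f x) (f y) (f z))) →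
        ∃ G ⊆ F, G.ncard = n ∧ ConvexPos G := by
      intro T hT hTn hcol
      have hh := homog hF hg hp h3 f T (fun r hr => hf r (hT hr)) hcol
      apply finish (T.image f)
      · intro A hA
        obtain ⟨r, hr, rfl⟩ := Finset.mem_image.1 hA
        exact (hf r (hT hr)).1
      · rw [Finset.card_image_of_injOn, hTn]
        intro r hr s hs h
        rw [← (hf r (hT hr)).2, ← (hf s (hT hs)).2]
        exact congrArg (fun A => supp A 0) h
      · intro A hA
        obtain ⟨r, hr, rfl⟩ := Finset.mem_image.1 hA
        obtain ⟨t, ht⟩ := hh r hr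
        refine ⟨t, fun B hB hBA => ?_⟩
        obtain ⟨s, hs, rfl⟩ := Finset.mem_image.1 hB
        exact ht s hs (by rintro rfl; exact hBA rfl)
    rcases hN S (fun x y z => LeftT (f x) (f y) (f z)) hSN with ⟨T, hT, hTn, h⟩ | ⟨T, hT, hTn, h⟩
    · exact conc T hT hTn (Or.inl h)
    · refine conc T hT hTn (Or.inr fun x hx y hy z hz hxy hyz => ?_)
      refine (left_or_right hF hg hp (hf x (hT hx)).1 (hf y (hT hy)).1 (hf z (hT hz)).1 ?_ ?_).resolve_left
        (h x hx y hy z hz hxy hyz)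
      · rwa [(hf x (hT hx)).2, (hf y (hT hy)).2]
      · rwa [(hf y (hT hy)).2, (hf z (hT hz)).2]
  · have hlt : S.card * n < Φ.card := by
      have : S.card * n ≤ N * n := Nat.mul_le_mul_right n (by omega)
      omega
    obtain ⟨r, hr, hfib⟩ := Finset.exists_lt_card_fiber_of_mul_lt_card_of_maps_to
      (f := fun A => supp A 0) (t := S) (fun A hA => Finset.mem_image_of_mem _ hA) hlt
    obtain ⟨G, hG, hGn⟩ := Finset.exists_subset_card_eq hfib.le
    have hG1 : ∀ A ∈ G, A ∈ F := fun A hA => (hmem A).1 (Finset.mem_filter.1 (hG hA)).1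
    exact finish G hG1 hGn (tie_case hF hg hp h3 G hG1 r
      (fun A hA => (Finset.mem_filter.1 (hG hA)).2))
end
end

section
/- For every pair of natural numbers t, n ≥ 3 there exists a natural number h such that every finite family of more than h pairwise distinct nonempty compact convex subsets of ℝ² contains either a subfamily of t members that admit a common transversal line, or a subfamily of n members in convex position. -/
open Set

noncomputable section

/-! ### Ramsey theorem for finite hypergraphs -/

theorem ramsey_aux {α κ : Type*} [DecidableEq α] [Fintype κ] [DecidableEq κ] (r : ℕ) :
    ∀ m : ℕ, ∃ N : ℕ, ∀ (c : Finset α → κ) (S : Finset α), N ≤ S.card →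
      ∃ T ⊆ S, T.card = m ∧ ∃ col, ∀ e ⊆ T, e.card = r → c e = col := by
  induction r with
  | zero =>
    intro m
    refine ⟨m, fun c S hS => ?_⟩
    obtain ⟨T, hTS, hT⟩ := Finset.exists_subset_card_eq hS
    refine ⟨T, hTS, hT, c ∅, fun e _ he => ?_⟩
    rw [Finset.card_eq_zero.1 he]
  | succ r ih =>
    have pre : ∀ m : ℕ, ∃ N : ℕ, ∀ (c : Finset α → κ) (S : Finset α), N ≤ S.card →
        ∃ T ⊆ S, T.card = m ∧ ∃ d : α → κ, ∀ e ⊆ T, e.card = r + 1 → ∃ x ∈ e, c e = d x := by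
      intro m
      induction m with
      | zero =>
        refine ⟨0, fun c S _ => ⟨∅, by simp, by simp, fun _ => c ∅, ?_⟩⟩
        intro e he hc
        rw [Finset.subset_empty.1 he] at hc
        simp at hc
      | succ m ihm =>
        obtain ⟨N, hN⟩ := ihm
        obtain ⟨M, hM⟩ := ih N
        refine ⟨M + 1, fun c S hS => ?_⟩
        have hne : S.Nonempty := Finset.card_pos.1 (by omega)
        obtain ⟨x0, hx0⟩ := hne
        obtain ⟨T1, hT1, hT1c, col, hcol⟩ := hM (fun e => c (insert x0 e)) (S.erase x0)
          (by rw [Finset.card_erase_of_mem hx0]; omega)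
        obtain ⟨T2, hT2, hT2c, d, hd⟩ := hN c T1 (by omega)
        have hx0T2 : x0 ∉ T2 := fun h => by simpa using hT1 (hT2 h)
        refine ⟨insert x0 T2, ?_, ?_, Function.update d x0 col, ?_⟩
        · intro y hy
          rcases Finset.mem_insert.1 hy with rfl | hy
          · exact hx0
          · exact Finset.mem_of_mem_erase (hT1 (hT2 hy))
        · rw [Finset.card_insert_of_notMem hx0T2, hT2c]
        · intro e he hec
          by_cases hxe : x0 ∈ e
          · refine ⟨x0, hxe, ?_⟩
            have := hcol (e.erase x0) (fun y hy => ?_) (by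
              rw [Finset.card_erase_of_mem hxe]; omega)
            · simp only [Finset.insert_erase hxe] at this
              simp [this]
            · have h1 := he (Finset.mem_of_mem_erase hy)
              rcases Finset.mem_insert.1 h1 with rfl | h1
              · simp at hy
              · exact hT2 h1
          · have he2 : e ⊆ T2 := fun y hy => by
              rcases Finset.mem_insert.1 (he hy) with rfl | h1
              · exact absurd hy hxe
              · exact h1
            obtain ⟨x, hx, hcx⟩ := hd e he2 hec
            refine ⟨x, hx, ?_⟩
            rw [Function.update_of_ne, hcx]
            rintro rfl
            exact hxe hx
    intro m
    obtain ⟨N, hN⟩ := pre (Fintype.card κ * m)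
    refine ⟨N, fun c S hS => ?_⟩
    obtain ⟨T, hTS, hTc, d, hd⟩ := hN c S hS
    have hκ : (Finset.univ : Finset κ).Nonempty := ⟨c ∅, Finset.mem_univ _⟩
    obtain ⟨col, -, hcol⟩ := Finset.exists_le_card_fiber_of_mul_le_card_of_maps_to
      (s := T) (t := (Finset.univ : Finset κ)) (f := d) (n := m) (fun _ _ => Finset.mem_univ _) hκ
      (by rw [hTc, Finset.card_univ])
    obtain ⟨T', hT', hT'c⟩ := Finset.exists_subset_card_eq hcol
    refine ⟨T', fun y hy => hTS (Finset.mem_filter.1 (hT' hy)).1, hT'c, col, fun e he hec => ?_⟩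
    obtain ⟨x, hx, hcx⟩ := hd e (fun y hy => (Finset.mem_filter.1 (hT' (he hy))).1) hec
    rw [hcx, (Finset.mem_filter.1 (hT' (he hx))).2]

/-! ### One-dimensional tools -/

/-- A nonvanishing continuous function on a preconnected set has constant sign. -/
theorem sign_const {X : Type*} [TopologicalSpace X] {S : Set X} (hS : IsPreconnected S)
    {f : X → ℝ} (hf : ContinuousOn f S) (h0 : ∀ x ∈ S, f x ≠ 0) :
    (∀ x ∈ S, 0 < f x) ∨ (∀ x ∈ S, f x < 0) := by
  by_contra! hcon
  obtain ⟨⟨x, hx, hfx⟩, ⟨y, hy, hfy⟩⟩ := hcon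
  obtain ⟨z, hz, hfz⟩ := hS.intermediate_value hx hy hf ⟨hfx, hfy⟩
  exact h0 z hz hfz

/-- Helly theorem on the line, pulled back along a function. -/
theorem helly_line {X ι : Type*} [TopologicalSpace X] (P : Finset ι) (K : ι → Set X) (g : X → ℝ)
    (hne : ∀ i ∈ P, (K i).Nonempty) (hc : ∀ i ∈ P, IsCompact (K i))
    (hp : ∀ i ∈ P, IsPreconnected (K i)) (hg : ∀ i ∈ P, ContinuousOn g (K i))
    (h : ∀ i ∈ P, ∀ j ∈ P, ∃ p ∈ K i, ∃ q ∈ K j, g p ≤ g q) :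
    ∃ c : ℝ, ∀ i ∈ P, ∃ p ∈ K i, g p = c := by
  rcases P.eq_empty_or_nonempty with rfl | hPne
  · exact ⟨0, by simp⟩
  have hmin : ∀ i ∈ P, ∃ x ∈ K i, ∀ y ∈ K i, g x ≤ g y := fun i hi =>
    (hc i hi).exists_isMinOn (hne i hi) (hg i hi)
  have : Nonempty X := ⟨(hne _ hPne.choose_spec).choose⟩
  choose! lo hlo hlo' using hmin
  obtain ⟨i0, hi0, hmax⟩ := P.exists_max_image (fun i => g (lo i)) hPne
  refine ⟨g (lo i0), fun j hj => ?_⟩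
  obtain ⟨p, hp', q, hq, hpq⟩ := h i0 hi0 j hj
  exact (hp j hj).intermediate_value (hlo j hj) hq (hg j hj)
    ⟨hmax j hj, (hlo' i0 hi0 p hp').trans hpq⟩

theorem compact_between {X Y : Set ℝ} (hX : IsCompact X) (hY : IsCompact Y)
    (h : ∀ x ∈ X, ∀ y ∈ Y, x < y) : ∃ m, (∀ x ∈ X, x < m) ∧ ∀ y ∈ Y, m < y := by
  rcases X.eq_empty_or_nonempty with rfl | hXn
  · rcases Y.eq_empty_or_nonempty with rfl | hYn
    · exact ⟨0, by simp, by simp⟩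
    · obtain ⟨y0, hy0, hm⟩ := hY.exists_isLeast hYn
      exact ⟨y0 - 1, by simp, fun y hy => by linarith [hm hy]⟩
  · obtain ⟨x0, hx0, hM⟩ := hX.exists_isGreatest hXn
    rcases Y.eq_empty_or_nonempty with rfl | hYn
    · exact ⟨x0 + 1, fun x hx => by linarith [hM hx], by simp⟩
    · obtain ⟨y0, hy0, hm⟩ := hY.exists_isLeast hYn
      have := h x0 hx0 y0 hy0
      exact ⟨(x0 + y0) / 2, fun x hx => by linarith [hM hx], fun y hy => by linarith [hm hy]⟩

/-! ### Geometry -/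

/-- `A` lies strictly to the left of `B`. -/
def LtX (A B : Set Plane) : Prop := ∀ p ∈ A, ∀ q ∈ B, p 0 < q 0

/-- Slope of the segment `pq`, up to reflection `σ`. -/
def slp (σ : ℝ) (p q : Plane) : ℝ := σ * ((q 1 - p 1) / (q 0 - p 0))

/-- The middle set lies above the other two (after reflection by `σ`). -/
def CapT (σ : ℝ) (A B C : Set Plane) : Prop :=
  ∀ a ∈ A, ∀ b ∈ B, ∀ c ∈ C, slp σ b c < slp σ a b

theorem slp_le_iff {σ m : ℝ} {p q : Plane} (h : p 0 < q 0) :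
    slp σ p q ≤ m ↔ σ * q 1 - m * q 0 ≤ σ * p 1 - m * p 0 := by
  have h' : 0 < q 0 - p 0 := by linarith
  rw [slp, ← mul_div_assoc, div_le_iff₀ h']
  constructor <;> intro h <;> nlinarith

theorem le_slp_iff {σ m : ℝ} {p q : Plane} (h : p 0 < q 0) :
    m ≤ slp σ p q ↔ σ * p 1 - m * p 0 ≤ σ * q 1 - m * q 0 := by
  have h' : 0 < q 0 - p 0 := by linarith
  rw [slp, ← mul_div_assoc, le_div_iff₀ h']
  constructor <;> intro h <;> nlinarith

theorem slp_eq_iff {σ m : ℝ} {p q : Plane} (h : p 0 < q 0) :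
    slp σ p q = m ↔ σ * q 1 - m * q 0 = σ * p 1 - m * p 0 := by
  rw [le_antisymm_iff, slp_le_iff h, le_slp_iff h, ← le_antisymm_iff]

theorem LtX.ne {A B : Set Plane} (hA : A.Nonempty) (h : LtX A B) : A ≠ B := by
  rintro rfl
  obtain ⟨p, hp⟩ := hA
  exact lt_irrefl _ (h p hp p hp)

theorem LtX.asymm {A B : Set Plane} (hA : A.Nonempty) (hB : B.Nonempty) (h : LtX A B) :
    ¬ LtX B A := by
  obtain ⟨p, hp⟩ := hA
  obtain ⟨q, hq⟩ := hB
  exact fun h' => lt_asymm (h p hp q hq) (h' q hq p hp)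

theorem coord_cont (i : Fin 2) : Continuous (fun p : Plane => p i) := by fun_prop

theorem ltX_total {A B : Set Plane} (hA : ConvexBody2 A) (hB : ConvexBody2 B)
    (h : ¬ ∃ x : ℝ, (∃ p ∈ A, p 0 = x) ∧ ∃ q ∈ B, q 0 = x) : LtX A B ∨ LtX B A := by
  have hpre : IsPreconnected (A ×ˢ B) := hA.2.2.isPreconnected.prod hB.2.2.isPreconnected
  rcases sign_const hpre (f := fun z => z.2 0 - z.1 0)
    (by fun_prop) (fun z hz h0 => h ⟨z.1 0, ⟨z.1, hz.1, rfl⟩, z.2, hz.2, by linarith⟩) with h | h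
  · left; intro p hp q hq
    have := h (p, q) ⟨hp, hq⟩
    simp only at this; linarith
  · right; intro p hp q hq
    have := h (q, p) ⟨hq, hp⟩
    simp only at this; linarith

/-- The family `T` has a common non-vertical transversal line. -/
def TransNV (T : Set (Set Plane)) : Prop :=
  ∃ m c : ℝ, ∀ A ∈ T, ∃ p ∈ A, p 1 - m * p 0 = c

theorem slp_contOn {A B : Set Plane} (σ : ℝ) (h : LtX A B) :
    ContinuousOn (fun z : Plane × Plane => slp σ z.1 z.2) (A ×ˢ B) := by
  unfold slp
  refine ContinuousOn.mul continuousOn_const (ContinuousOn.div (by fun_prop) (by fun_prop) ?_)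
  intro z hz
  have := h z.1 hz.1 z.2 hz.2
  intro h0
  linarith

/-- A triple without transversal is a cap or a cup. -/
theorem triple_cases {A B C : Set Plane} (hA : ConvexBody2 A) (hB : ConvexBody2 B)
    (hC : ConvexBody2 C) (hAB : LtX A B) (hBC : LtX B C) (hT : ¬ TransNV {A, B, C}) :
    CapT 1 A B C ∨ CapT (-1) A B C := by
  have hpre : IsPreconnected (A ×ˢ (B ×ˢ C)) :=
    hA.2.2.isPreconnected.prod (hB.2.2.isPreconnected.prod hC.2.2.isPreconnected)
  have h1 : ContinuousOn (fun z : Plane × Plane × Plane => slp 1 z.1 z.2.1) (A ×ˢ (B ×ˢ C)) :=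
    (slp_contOn 1 hAB).comp (f := fun z : Plane × Plane × Plane => (z.1, z.2.1))
      (by fun_prop) (fun z hz => ⟨hz.1, hz.2.1⟩)
  have h2 : ContinuousOn (fun z : Plane × Plane × Plane => slp 1 z.2.1 z.2.2) (A ×ˢ (B ×ˢ C)) :=
    (slp_contOn 1 hBC).comp (f := fun z : Plane × Plane × Plane => (z.2.1, z.2.2))
      (by fun_prop) (fun z hz => ⟨hz.2.1, hz.2.2⟩)
  rcases sign_const hpre (h1.sub h2) (by
    rintro ⟨a, b, c⟩ ⟨ha, hb, hc⟩ h0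
    simp only [Pi.sub_apply] at ha hb hc h0
    apply hT
    have e1 := (slp_eq_iff (σ := 1) (hAB a ha b hb)).1 rfl
    have e2 := (slp_eq_iff (σ := 1) (m := slp 1 a b) (hBC b hb c hc)).1 (by linarith)
    refine ⟨slp 1 a b, b 1 - slp 1 a b * b 0, ?_⟩
    rintro X (rfl | rfl | rfl)
    · exact ⟨a, ha, by linarith⟩
    · exact ⟨b, hb, by linarith⟩
    · exact ⟨c, hc, by linarith⟩) with h | h
  · left
    intro a ha b hb c hc
    have := h (a, b, c) ⟨ha, hb, hc⟩
    simp only [Pi.sub_apply] at this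
    linarith
  · right
    intro a ha b hb c hc
    have := h (a, b, c) ⟨ha, hb, hc⟩
    simp only [slp, Pi.sub_apply] at this ⊢
    linarith

/-- A family, totally ordered from left to right, all of whose triples are caps,
is in convex position. -/
theorem convexPos_of_cap (σ : ℝ) (G : Set (Set Plane)) (hfin : G.Finite)
    (hb : ∀ A ∈ G, ConvexBody2 A) (htot : ∀ A ∈ G, ∀ B ∈ G, A ≠ B → LtX A B ∨ LtX B A)
    (hcap : ∀ A ∈ G, ∀ B ∈ G, ∀ C ∈ G, LtX A B → LtX B C → CapT σ A B C) : ConvexPos G := by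
  intro A hA heq
  obtain ⟨p, hp⟩ := (hb A hA).1
  have hX : IsCompact ((fun q => slp σ p q) '' ⋃ B ∈ {B ∈ G | LtX A B}, B) := by
    refine IsCompact.image_of_continuousOn
      ((hfin.subset (sep_subset _ _)).isCompact_biUnion fun B hB => (hb B hB.1).2.1) ?_
    unfold slp
    refine ContinuousOn.mul continuousOn_const (ContinuousOn.div (by fun_prop) (by fun_prop) ?_)
    intro q hq h0
    simp only [mem_iUnion] at hq
    obtain ⟨B, hB, hqB⟩ := hq
    linarith [hB.2 p hp q hqB]
  have hY : IsCompact ((fun q => slp σ q p) '' ⋃ B ∈ {B ∈ G | LtX B A}, B) := by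
    refine IsCompact.image_of_continuousOn
      ((hfin.subset (sep_subset _ _)).isCompact_biUnion fun B hB => (hb B hB.1).2.1) ?_
    unfold slp
    refine ContinuousOn.mul continuousOn_const (ContinuousOn.div (by fun_prop) (by fun_prop) ?_)
    intro q hq h0
    simp only [mem_iUnion] at hq
    obtain ⟨B, hB, hqB⟩ := hq
    linarith [hB.2 q hqB p hp]
  obtain ⟨m, hm1, hm2⟩ := compact_between hX hY (by
    rintro _ ⟨c, hc, rfl⟩ _ ⟨a, ha, rfl⟩
    simp only [mem_iUnion] at ha hc
    obtain ⟨B, hB, haB⟩ := ha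
    obtain ⟨C, hC, hcC⟩ := hc
    exact hcap B hB.1 A hA C hC.1 hB.2 hC.2 a haB p hp c hcC)
  have hsub : convexHull ℝ (⋃₀ (G \ {A})) ⊆ {q | σ * q 1 - m * q 0 < σ * p 1 - m * p 0} := by
    apply convexHull_min
    · rintro q ⟨B, ⟨hBG, hBA⟩, hq⟩
      simp only [mem_ofPred_eq]
      rcases htot A hA B hBG (fun h => hBA h.symm) with h | h
      · have := hm1 _ ⟨q, mem_biUnion (show B ∈ {B ∈ G | LtX A B} from ⟨hBG, h⟩) hq, rfl⟩
        by_contra! hcon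
        exact absurd ((le_slp_iff (h p hp q hq)).2 hcon) (not_le.2 this)
      · have := hm2 _ ⟨q, mem_biUnion (show B ∈ {B ∈ G | LtX B A} from ⟨hBG, h⟩) hq, rfl⟩
        by_contra! hcon
        exact absurd ((slp_le_iff (h q hq p hp)).2 hcon) (not_le.2 this)
    · refine convex_halfSpace_lt (f := fun q : Plane => σ * q 1 - m * q 0) ⟨?_, ?_⟩ _
      · intro x y; simp; ring
      · intro c x; simp; ring
  have hpin : p ∈ convexHull ℝ (⋃₀ (G \ {A})) := heq ▸ subset_convexHull ℝ _ ⟨A, hA, hp⟩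
  have hlt : σ * p 1 - m * p 0 < σ * p 1 - m * p 0 := hsub hpin
  exact lt_irrefl _ hlt

/-- Hadwiger transversal theorem for families ordered from left to right. -/
theorem hadwiger (T : Finset (Set Plane))
    (hb : ∀ A ∈ T, ConvexBody2 A) (htot : ∀ A ∈ T, ∀ B ∈ T, A ≠ B → LtX A B ∨ LtX B A)
    (h3 : ∀ A ∈ T, ∀ B ∈ T, ∀ C ∈ T, A ≠ B → B ≠ C → A ≠ C → TransNV {A, B, C}) :
    TransNV (T : Set (Set Plane)) := by
  classical
  -- no triple has both an up and a down pair
  have key : ∀ m : ℝ, ∀ A ∈ T, ∀ B ∈ T, ∀ C ∈ T, ∀ D ∈ T, LtX A B → LtX C D →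
      (∀ a ∈ A, ∀ b ∈ B, a 1 - m * a 0 < b 1 - m * b 0) →
      (∀ c ∈ C, ∀ d ∈ D, d 1 - m * d 0 < c 1 - m * c 0) →
      (A = C ∨ A = D ∨ B = C ∨ B = D) → False := by
    intro m A hA B hB C hC D hD hAB hCD hu hd hsh
    have hABne : A ≠ B := hAB.ne (hb A hA).1
    have hCDne : C ≠ D := hCD.ne (hb C hC).1
    have : ∃ m' c : ℝ, ∀ X, (X = A ∨ X = B ∨ X = C ∨ X = D) → ∃ p ∈ X, p 1 - m' * p 0 = c := by
      by_cases hall : (C = A ∨ C = B) ∧ (D = A ∨ D = B)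
      · exfalso
        obtain ⟨a, ha⟩ := (hb A hA).1
        obtain ⟨b, hb'⟩ := (hb B hB).1
        rcases hall with ⟨rfl | rfl, rfl | rfl⟩
        · exact hCDne rfl
        · exact lt_asymm (hu a ha b hb') (hd a ha b hb')
        · exact hAB.asymm (hb _ hA).1 (hb _ hB).1 hCD
        · exact hCDne rfl
      · by_cases hCn : C = A ∨ C = B
        · have hDn : ¬ (D = A ∨ D = B) := fun h => hall ⟨hCn, h⟩
          push Not at hDn
          obtain ⟨m', c, h⟩ := h3 A hA B hB D hD hABne hDn.2.symm hDn.1.symm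
          refine ⟨m', c, fun X hX => h X ?_⟩
          simp only [mem_insert_iff, mem_singleton_iff]
          grind
        · push Not at hCn
          obtain ⟨m', c, h⟩ := h3 A hA B hB C hC hABne hCn.2.symm hCn.1.symm
          refine ⟨m', c, fun X hX => h X ?_⟩
          simp only [mem_insert_iff, mem_singleton_iff]
          grind
    obtain ⟨m', c', h⟩ := this
    obtain ⟨a, ha, ea⟩ := h A (by simp)
    obtain ⟨b, hb', eb⟩ := h B (by simp)
    obtain ⟨c, hc, ec⟩ := h C (by simp)
    obtain ⟨d, hd', ed⟩ := h D (by simp)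
    have i1 := hAB a ha b hb'
    have i2 := hCD c hc d hd'
    have i3 := hu a ha b hb'
    have i4 := hd c hc d hd'
    have j1 : 0 < (m' - m) * (b 0 - a 0) := by nlinarith
    have j2 : 0 < (m - m') * (d 0 - c 0) := by nlinarith
    have k1 : 0 < m' - m := pos_of_mul_pos_left j1 (by linarith)
    have k2 : 0 < m - m' := pos_of_mul_pos_left j2 (by linarith)
    linarith
  -- a common slope for all pairs
  obtain ⟨m, hm⟩ := helly_line ((T ×ˢ T).filter fun z => LtX z.1 z.2)
    (fun z => z.1 ×ˢ z.2) (fun z : Plane × Plane => slp 1 z.1 z.2)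
    (by
      rintro ⟨A, B⟩ hz
      simp only [Finset.mem_filter, Finset.mem_product] at hz
      exact (hb A hz.1.1).1.prod (hb B hz.1.2).1)
    (by
      rintro ⟨A, B⟩ hz
      simp only [Finset.mem_filter, Finset.mem_product] at hz
      exact (hb A hz.1.1).2.1.prod (hb B hz.1.2).2.1)
    (by
      rintro ⟨A, B⟩ hz
      simp only [Finset.mem_filter, Finset.mem_product] at hz
      exact (hb A hz.1.1).2.2.isPreconnected.prod (hb B hz.1.2).2.2.isPreconnected)
    (by
      rintro ⟨A, B⟩ hz
      simp only [Finset.mem_filter, Finset.mem_product] at hz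
      exact slp_contOn 1 hz.2)
    (by
      rintro ⟨A, B⟩ hz ⟨C, D⟩ hw
      simp only [Finset.mem_filter, Finset.mem_product] at hz hw
      obtain ⟨⟨hA, hB⟩, hAB⟩ := hz
      obtain ⟨⟨hC, hD⟩, hCD⟩ := hw
      by_contra! hcon
      have cont1 := slp_contOn 1 hAB
      have cont2 := slp_contOn 1 hCD
      obtain ⟨m, hm1, hm2⟩ := compact_between
        (((hb C hC).2.1.prod (hb D hD).2.1).image_of_continuousOn cont2)
        (((hb A hA).2.1.prod (hb B hB).2.1).image_of_continuousOn cont1)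
        (by
          rintro _ ⟨w, hw, rfl⟩ _ ⟨z, hz, rfl⟩
          exact hcon z hz w hw)
      have hu : ∀ a ∈ A, ∀ b ∈ B, a 1 - m * a 0 < b 1 - m * b 0 := by
        intro a ha b hb'
        have := hm2 _ ⟨(a, b), ⟨ha, hb'⟩, rfl⟩
        by_contra! hc
        exact absurd ((slp_le_iff (σ := 1) (m := m) (hAB a ha b hb')).2 (by linarith))
          (not_le.2 this)
      have hd : ∀ c ∈ C, ∀ d ∈ D, d 1 - m * d 0 < c 1 - m * c 0 := by
        intro c hc d hd'
        have := hm1 _ ⟨(c, d), ⟨hc, hd'⟩, rfl⟩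
        by_contra! hc'
        exact absurd ((le_slp_iff (σ := 1) (m := m) (hCD c hc d hd')).2 (by linarith))
          (not_le.2 this)
      by_cases hsh : A = C ∨ A = D ∨ B = C ∨ B = D
      · exact key m A hA B hB C hC D hD hAB hCD hu hd hsh
      · push Not at hsh
        -- intervals: A < B and D < C
        have alt : (∀ a ∈ A, ∀ c ∈ C, a 1 - m * a 0 < c 1 - m * c 0) ∨
            (∀ d ∈ D, ∀ b ∈ B, d 1 - m * d 0 < b 1 - m * b 0) := by
          by_contra! hno
          obtain ⟨⟨a, ha, c, hc, h1⟩, ⟨d, hd', b, hb', h2⟩⟩ := hno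
          linarith [hu a ha b hb', hd c hc d hd']
        rcases alt with h | h
        · rcases htot A hA C hC hsh.1 with h' | h'
          · exact key m A hA C hC C hC D hD h' hCD h hd (by simp)
          · exact key m A hA B hB C hC A hA hAB h' hu (fun c hc a ha => h a ha c hc) (by simp)
        · rcases htot D hD B hB hsh.2.2.2.symm with h' | h'
          · exact key m D hD B hB C hC D hD h' hCD h hd (by simp)
          · exact key m A hA B hB B hB D hD hAB h' hu (fun b hb' d hd' => h d hd' b hb')
              (by simp))
  obtain ⟨c, hc⟩ := helly_line T id (fun p : Plane => p 1 - m * p 0)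
    (fun A hA => (hb A hA).1) (fun A hA => (hb A hA).2.1)
    (fun A hA => (hb A hA).2.2.isPreconnected) (fun A hA => by fun_prop)
    (by
      intro A hA B hB
      by_cases hAB : A = B
      · subst hAB
        obtain ⟨p, hp⟩ := (hb A hA).1
        exact ⟨p, hp, p, hp, le_rfl⟩
      · rcases htot A hA B hB hAB with h | h
        · obtain ⟨⟨p, q⟩, hpq, e⟩ := hm (A, B) (by simp [hA, hB, h])
          have := (slp_eq_iff (σ := 1) (h p hpq.1 q hpq.2)).1 e
          exact ⟨p, hpq.1, q, hpq.2, by linarith⟩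
        · obtain ⟨⟨p, q⟩, hpq, e⟩ := hm (B, A) (by simp [hA, hB, h])
          have := (slp_eq_iff (σ := 1) (h p hpq.1 q hpq.2)).1 e
          exact ⟨q, hpq.2, p, hpq.1, by linarith⟩)
  exact ⟨m, c, hc⟩

/-! ### Lines -/

theorem exists_line (G : Set (Set Plane)) (o v : Plane) (hv : v ≠ 0)
    (h : ∀ A ∈ G, ∃ s : ℝ, s • v + o ∈ A) : ∃ L : AffineSubspace ℝ Plane, TransversalLine L G := by
  refine ⟨AffineSubspace.mk' o (Submodule.span ℝ {v}), ?_, ?_⟩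
  · rw [IsLine, AffineSubspace.direction_mk', finrank_span_singleton hv]
  · intro A hA
    obtain ⟨s, hs⟩ := h A hA
    refine ⟨_, ?_, hs⟩
    simp only [SetLike.mem_coe, AffineSubspace.mem_mk', vsub_eq_sub, add_sub_cancel_right]
    exact Submodule.smul_mem _ _ (Submodule.mem_span_singleton_self v)

theorem line_of_transNV (G : Set (Set Plane)) (h : TransNV G) :
    ∃ L : AffineSubspace ℝ Plane, TransversalLine L G := by
  obtain ⟨m, c, h⟩ := h
  refine exists_line G !₂[0, c] !₂[1, m] (fun h0 => ?_) (fun A hA => ?_)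
  · have := congrArg (fun p : Plane => p 0) h0
    simp at this
  · obtain ⟨p, hp, e⟩ := h A hA
    refine ⟨p 0, ?_⟩
    convert hp using 1
    ext i
    fin_cases i
    · simp
    · simp; linarith

theorem line_of_vertical (G : Set (Set Plane)) (h : ∃ c : ℝ, ∀ A ∈ G, ∃ p ∈ A, p 0 = c) :
    ∃ L : AffineSubspace ℝ Plane, TransversalLine L G := by
  obtain ⟨c, h⟩ := h
  refine exists_line G !₂[c, 0] !₂[0, 1] (fun h0 => ?_) (fun A hA => ?_)
  · have := congrArg (fun p : Plane => p 1) h0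
    simp at this
  · obtain ⟨p, hp, e⟩ := h A hA
    refine ⟨p 1, ?_⟩
    convert hp using 1
    ext i
    fin_cases i
    · simp [e]
    · simp

/-- Among sufficiently many convex bodies in the plane there are `t` with a common
transversal line or `n` in convex position. -/
theorem line_transversal_or_convex_position :
    ∀ t n : ℕ, 3 ≤ t → 3 ≤ n → ∃ h : ℕ, ∀ F : Set (Set Plane), F.Finite → h < F.ncard →
      (∀ A ∈ F, ConvexBody2 A) →
      (∃ G ⊆ F, G.ncard = t ∧ ∃ L : AffineSubspace ℝ Plane, TransversalLine L G) ∨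
      (∃ G ⊆ F, G.ncard = n ∧ ConvexPos G) := by
  classical
  intro t n _ _
  obtain ⟨M, hM⟩ := ramsey_aux (α := Set Plane) (κ := Fin 3) 3 (max t n)
  obtain ⟨N, hN⟩ := ramsey_aux (α := Set Plane) (κ := Bool) 2 (max t M)
  refine ⟨N, fun F hF hcard hb => ?_⟩
  obtain ⟨F, rfl⟩ := hF.exists_finset_coe
  rw [ncard_coe_finset] at hcard
  have pick : ∀ (T : Finset (Set Plane)) (k : ℕ), T ⊆ F → k ≤ T.card →
      ∃ G : Finset (Set Plane), G ⊆ T ∧ (G : Set (Set Plane)) ⊆ F ∧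
        (G : Set (Set Plane)).ncard = k := by
    intro T k hT hk
    obtain ⟨G, hGT, hG⟩ := Finset.exists_subset_card_eq hk
    exact ⟨G, hGT, by exact_mod_cast hGT.trans hT, by rw [ncard_coe_finset, hG]⟩
  obtain ⟨S, hSF, hS, col, hcol⟩ := hN
    (fun e => decide (∃ x : ℝ, ∀ A ∈ e, ∃ p ∈ A, p 0 = x)) F hcard.le
  have hbS : ∀ A ∈ S, ConvexBody2 A := fun A hA => hb A (hSF hA)
  cases col with
  | true =>
    left
    obtain ⟨G, hGS, hGF, hG⟩ := pick S t hSF (by omega)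
    refine ⟨G, hGF, hG, line_of_vertical _ ?_⟩
    refine helly_line G id (fun p : Plane => p 0)
      (fun A hA => (hbS A (hGS hA)).1) (fun A hA => (hbS A (hGS hA)).2.1)
      (fun A hA => (hbS A (hGS hA)).2.2.isPreconnected) (fun A hA => by fun_prop) ?_
    intro A hA B hB
    by_cases hAB : A = B
    · subst hAB
      obtain ⟨p, hp⟩ := (hbS A (hGS hA)).1
      exact ⟨p, hp, p, hp, le_rfl⟩
    · have := hcol {A, B} (by
        intro X hX
        simp only [Finset.mem_insert, Finset.mem_singleton] at hX
        rcases hX with rfl | rfl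
        · exact hGS hA
        · exact hGS hB) (Finset.card_pair hAB)
      obtain ⟨x, hx⟩ := of_decide_eq_true this
      obtain ⟨p, hp, ep⟩ := hx A (by simp)
      obtain ⟨q, hq, eq⟩ := hx B (by simp)
      exact ⟨p, hp, q, hq, by simp only [ep, eq, le_refl]⟩
  | false =>
    have htot : ∀ A ∈ S, ∀ B ∈ S, A ≠ B → LtX A B ∨ LtX B A := by
      intro A hA B hB hAB
      have := hcol {A, B} (by
        intro X hX
        simp only [Finset.mem_insert, Finset.mem_singleton] at hX
        rcases hX with rfl | rfl
        · exact hA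
        · exact hB) (Finset.card_pair hAB)
      have := of_decide_eq_false this
      apply ltX_total (hbS A hA) (hbS B hB)
      rintro ⟨x, h1, h2⟩
      apply this
      refine ⟨x, fun X hX => ?_⟩
      simp only [Finset.mem_insert, Finset.mem_singleton] at hX
      rcases hX with rfl | rfl
      · exact h1
      · exact h2
    obtain ⟨T, hTS, hT, col3, hcol3⟩ := hM
      (fun e => if TransNV (e : Set (Set Plane)) then 0 else
        if ∃ A ∈ e, ∃ B ∈ e, ∃ C ∈ e, LtX A B ∧ LtX B C ∧ CapT 1 A B C then 1 else 2) S
      (by omega)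
    have hbT : ∀ A ∈ T, ConvexBody2 A := fun A hA => hbS A (hTS hA)
    have hsub : ∀ A ∈ T, ∀ B ∈ T, ∀ C ∈ T, ({A, B, C} : Finset (Set Plane)) ⊆ T := by
      intro A hA B hB C hC X hX
      simp only [Finset.mem_insert, Finset.mem_singleton] at hX
      rcases hX with rfl | rfl | rfl <;> assumption
    have hc3 : ∀ A ∈ T, ∀ B ∈ T, ∀ C ∈ T, A ≠ B → B ≠ C → A ≠ C →
        (if TransNV {A, B, C} then (0 : Fin 3) else
        if ∃ A' ∈ ({A, B, C} : Finset (Set Plane)), ∃ B' ∈ ({A, B, C} : Finset (Set Plane)),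
          ∃ C' ∈ ({A, B, C} : Finset (Set Plane)), LtX A' B' ∧ LtX B' C' ∧ CapT 1 A' B' C'
          then 1 else 2) = col3 := by
      intro A hA B hB C hC h1 h2 h3
      have := hcol3 {A, B, C} (hsub A hA B hB C hC) (Finset.card_eq_three.2
        ⟨A, B, C, h1, h3, h2, rfl⟩)
      simpa only [Finset.coe_insert, Finset.coe_singleton] using this
    have hltne : ∀ A ∈ T, ∀ B ∈ T, ∀ C ∈ T, LtX A B → LtX B C →
        A ≠ B ∧ B ≠ C ∧ A ≠ C ∧ ¬ LtX B A ∧ ¬ LtX C B ∧ ¬ LtX C A := by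
      intro A hA B hB C hC h1 h2
      have h3 : LtX A C := by
        obtain ⟨q, hq⟩ := (hbT B hB).1
        exact fun a ha c hc => (h1 a ha q hq).trans (h2 q hq c hc)
      exact ⟨h1.ne (hbT A hA).1, h2.ne (hbT B hB).1, h3.ne (hbT A hA).1,
        h1.asymm (hbT A hA).1 (hbT B hB).1, h2.asymm (hbT B hB).1 (hbT C hC).1,
        h3.asymm (hbT A hA).1 (hbT C hC).1⟩
    have finish : ∀ σ : ℝ, (∀ A ∈ T, ∀ B ∈ T, ∀ C ∈ T, LtX A B → LtX B C → CapT σ A B C) →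
        ∃ G ⊆ (F : Set (Set Plane)), G.ncard = n ∧ ConvexPos G := by
      intro σ h
      obtain ⟨G, hGT, hGF, hG⟩ := pick T n (hTS.trans hSF) (by omega)
      refine ⟨G, hGF, hG, convexPos_of_cap σ _ G.finite_toSet ?_ ?_ ?_⟩
      · exact fun A hA => hbT A (hGT hA)
      · exact fun A hA B hB => htot A (hTS (hGT hA)) B (hTS (hGT hB))
      · exact fun A hA B hB C hC => h A (hGT hA) B (hGT hB) C (hGT hC)
    have hcases : col3 = 0 ∨ col3 = 1 ∨ col3 = 2 := by
      fin_cases col3 <;> simp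
    rcases hcases with rfl | rfl | rfl
    · left
      obtain ⟨G, hGT, hGF, hG⟩ := pick T t (hTS.trans hSF) (by omega)
      refine ⟨G, hGF, hG, line_of_transNV _ (hadwiger G ?_ ?_ ?_)⟩
      · exact fun A hA => hbT A (hGT hA)
      · exact fun A hA B hB => htot A (hTS (hGT hA)) B (hTS (hGT hB))
      · intro A hA B hB C hC h1 h2 h3
        have := hc3 A (hGT hA) B (hGT hB) C (hGT hC) h1 h2 h3
        by_contra hno
        rw [if_neg hno] at this
        split_ifs at this <;> simp at this
    · right
      refine finish 1 fun A hA B hB C hC hAB hBC => ?_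
      obtain ⟨n1, n2, n3, l1, l2, l3⟩ := hltne A hA B hB C hC hAB hBC
      have := hc3 A hA B hB C hC n1 n2 n3
      split_ifs at this with i1 i2
      · simp at this
      · obtain ⟨A', hA', B', hB', C', hC', h1, h2, h3⟩ := i2
        have hs := hsub A hA B hB C hC
        obtain ⟨m1, m2, m3, k1, k2, k3⟩ := hltne A' (hs hA') B' (hs hB') C' (hs hC') h1 h2
        simp only [Finset.mem_insert, Finset.mem_singleton] at hA' hB' hC'
        have : A' = A ∧ B' = B ∧ C' = C := by
          rcases hA' with rfl | rfl | rfl <;> rcases hB' with rfl | rfl | rfl <;>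
            rcases hC' with rfl | rfl | rfl <;> first | exact ⟨rfl, rfl, rfl⟩ | (exfalso; tauto)
        obtain ⟨rfl, rfl, rfl⟩ := this
        exact h3
      · simp at this
    · right
      refine finish (-1) fun A hA B hB C hC hAB hBC => ?_
      obtain ⟨n1, n2, n3, l1, l2, l3⟩ := hltne A hA B hB C hC hAB hBC
      have := hc3 A hA B hB C hC n1 n2 n3
      split_ifs at this with i1 i2
      · simp at this
      · simp at this
      · rcases triple_cases (hbT A hA) (hbT B hB) (hbT C hC) hAB hBC i1 with h | h
        · exact absurd ⟨A, by simp, B, by simp, C, by simp, hAB, hBC, h⟩ i2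
        · exact h
end
end
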